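/- Let λ be any Borel probability measure on S¹ and n ≥ 1. Let w_n and w_{n+1} be probability weight functions on the sets of partitions of {1,…,n} and of {1,…,n+1} respectively, satisfying the consistency relation: for every partition π of {1,…,n}, w_n(π) = w_{n+1}(π ∪ {{n+1}}) + Σ_{B ∈ π} w_{n+1}(π_B), where π ∪ {{n+1}} adjoins {n+1} as a singleton block and π_B adds n+1 to the block B. Then the pushforward of the mixture measure Σ_{π'} w_{n+1}(π') · λ_{π'} under the restriction map (Fin (n+1) → S¹) → (Fin n → S¹) (forgetting the last coordinate) equals Σ_π w_n(π) · λ_π. -/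

import Mathlib

open MeasureTheory

noncomputable section

/-- The circle `ℝ/ℤ`. -/
abbrev Circle1 : Type := AddCircle (1 : ℝ)

/-- `λ_π`: the pushforward of the product measure `λ^{⊗ B(π)}` (one factor for each
block of `π`) under the diagonal-filling map `φ_π`, `(φ_π y)_i = y(B)` for `i ∈ B`. -/
def lambdaPart {m : ℕ} (lam : Measure Circle1)
    (P : Finpartition (Finset.univ : Finset (Fin m))) : Measure (Fin m → Circle1) :=
  (Measure.pi (fun _ : P.parts => lam)).map
    (fun y i => y ⟨P.part i, P.part_mem.2 (Finset.mem_univ i)⟩)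

lemma mc_pi_map {α β : Type*} [Fintype α] [Fintype β] (lam : Measure Circle1)
    [IsProbabilityMeasure lam] (g : α → β) (hg : Function.Injective g) :
    (Measure.pi (fun _ : β => lam)).map (fun y a => y (g a)) =
      Measure.pi (fun _ : α => lam) := by
  classical
  have hm : Measurable (fun (y : β → Circle1) (a : α) => y (g a)) := by fun_prop
  symm
  apply Measure.pi_eq
  intro s hs
  rw [Measure.map_apply hm (MeasurableSet.univ_pi hs)]
  have : (fun (y : β → Circle1) (a : α) => y (g a)) ⁻¹' (Set.univ.pi s) =
      Set.univ.pi (fun b => ⋂ a, ⋂ (_ : g a = b), s a) := by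
    ext y
    simp only [Set.mem_preimage, Set.mem_univ_pi, Set.mem_iInter]
    constructor
    · rintro h b a rfl
      exact h a
    · intro h a
      exact h (g a) a rfl
  rw [this, Measure.pi_pi]
  symm
  apply Fintype.prod_of_injective g hg
  · intro b hb
    have : (⋂ a, ⋂ (_ : g a = b), s a) = Set.univ := by
      simp only [Set.iInter_eq_univ]
      intro a ha
      exact absurd ⟨a, ha⟩ hb
    rw [this, measure_univ]
  · intro a
    congr 1
    ext x
    simp only [Set.mem_iInter]
    constructor
    · intro h a' h'
      rw [hg h']; exact h
    · intro h
      exact h a rfl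

lemma mc_lambda {n : ℕ} (lam : Measure Circle1) [IsProbabilityMeasure lam]
    (P : Finpartition (Finset.univ : Finset (Fin n)))
    (Q : Finpartition (Finset.univ : Finset (Fin (n + 1))))
    (h : ∀ i j, j.castSucc ∈ Q.part i.castSucc ↔ j ∈ P.part i) :
    (lambdaPart lam Q).map (fun x (i : Fin n) => x i.castSucc) = lambdaPart lam P := by
  have h' : ∀ i j, Q.part j.castSucc = Q.part i.castSucc ↔ P.part j = P.part i := by
    intro i j
    rw [← Finpartition.mem_part_iff_part_eq_part _ (Finset.mem_univ _) (Finset.mem_univ _),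
      ← Finpartition.mem_part_iff_part_eq_part _ (Finset.mem_univ _) (Finset.mem_univ _)]
    exact h i j
  have hne : ∀ B : P.parts, ∃ i, P.part i = B.1 := fun B => by
    obtain ⟨i, -, hi⟩ := P.part_surjOn B.2
    exact ⟨i, hi⟩
  choose r hr using hne
  let g : P.parts → Q.parts := fun B =>
    ⟨Q.part (r B).castSucc, Q.part_mem.2 (Finset.mem_univ _)⟩
  have hg : Function.Injective g := by
    intro B B' hB
    have := (h' _ _).1 (congrArg Subtype.val hB)
    rw [hr, hr] at this
    exact Subtype.ext this
  unfold lambdaPart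
  rw [← mc_pi_map lam g hg, Measure.map_map (by fun_prop) (by fun_prop),
    Measure.map_map (by fun_prop) (by fun_prop)]
  congr 1
  funext y i
  simp only [Function.comp, g]
  congr 2
  rw [h', hr]

lemma mc_ext {m : ℕ} (P Q : Finpartition (Finset.univ : Finset (Fin m)))
    (h : ∀ i, P.part i = Q.part i) : P = Q := by
  ext B
  constructor
  · intro hB
    obtain ⟨i, -, rfl⟩ := P.part_surjOn hB
    rw [h]; exact Q.part_mem.2 (Finset.mem_univ _)
  · intro hB
    obtain ⟨i, -, rfl⟩ := Q.part_surjOn hB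
    rw [← h]; exact P.part_mem.2 (Finset.mem_univ _)

/-- let `w` and `w'` be probability weight functions on the partitions of
`{1,…,n}` and of `{1,…,n+1}` satisfying the consistency relation
`w(π) = w'(π ∪ {{n+1}}) + Σ_{B ∈ π} w'(π_B)`, where `π ∪ {{n+1}}` adjoins `{n+1}` as a
singleton block (the map `ext0`) and `π_B` adds `n+1` to the block `B` (the map `extB`).
Then the pushforward of the mixture `Σ_{π'} w'(π') · λ_{π'}` under the map forgetting
the last coordinate equals `Σ_π w(π) · λ_π`. -/
theorem mixture_consistent (lam : Measure Circle1) [IsProbabilityMeasure lam]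
    (n : ℕ) (hn : 1 ≤ n)
    (w : Finpartition (Finset.univ : Finset (Fin n)) → ℝ)
    (w' : Finpartition (Finset.univ : Finset (Fin (n + 1))) → ℝ)
    (hw0 : ∀ P, 0 ≤ w P)
    (hw1 : ∑ P : Finpartition (Finset.univ : Finset (Fin n)), w P = 1)
    (hw'0 : ∀ P', 0 ≤ w' P')
    (hw'1 : ∑ P' : Finpartition (Finset.univ : Finset (Fin (n + 1))), w' P' = 1)
    (ext0 : Finpartition (Finset.univ : Finset (Fin n)) →
      Finpartition (Finset.univ : Finset (Fin (n + 1))))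
    (hext0 : ∀ P, (ext0 P).parts =
      insert {Fin.last n} (P.parts.image (Finset.map Fin.castSuccEmb)))
    (extB : Finpartition (Finset.univ : Finset (Fin n)) → Finset (Fin n) →
      Finpartition (Finset.univ : Finset (Fin (n + 1))))
    (hextB : ∀ P B, B ∈ P.parts → (extB P B).parts =
      insert (insert (Fin.last n) (B.map Fin.castSuccEmb))
        ((P.parts.erase B).image (Finset.map Fin.castSuccEmb)))
    (hcons : ∀ P : Finpartition (Finset.univ : Finset (Fin n)),
      w P = w' (ext0 P) + ∑ B ∈ P.parts, w' (extB P B)) :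
    (∑ P' : Finpartition (Finset.univ : Finset (Fin (n + 1))),
        ENNReal.ofReal (w' P') • lambdaPart lam P').map (fun x (i : Fin n) => x i.castSucc)
      = ∑ P : Finpartition (Finset.univ : Finset (Fin n)),
          ENNReal.ofReal (w P) • lambdaPart lam P := by
  classical
  have e0c : ∀ P i, (ext0 P).part i.castSucc = (P.part i).map Fin.castSuccEmb := by
    intro P i
    apply Finpartition.part_eq_of_mem
    · rw [hext0]
      exact Finset.mem_insert_of_mem
        (Finset.mem_image_of_mem _ (P.part_mem.2 (Finset.mem_univ _)))
    · simp
  have e0l : ∀ P, (ext0 P).part (Fin.last n) = {Fin.last n} := by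
    intro P
    apply Finpartition.part_eq_of_mem
    · rw [hext0]
      exact Finset.mem_insert_self _ _
    · simp
  have eBl : ∀ P, ∀ B ∈ P.parts, (extB P B).part (Fin.last n) =
      insert (Fin.last n) (B.map Fin.castSuccEmb) := by
    intro P B hB
    apply Finpartition.part_eq_of_mem
    · rw [hextB _ _ hB]
      exact Finset.mem_insert_self _ _
    · simp
  have eBc : ∀ P, ∀ B ∈ P.parts, ∀ i, P.part i ≠ B →
      (extB P B).part i.castSucc = (P.part i).map Fin.castSuccEmb := by
    intro P B hB i hi
    apply Finpartition.part_eq_of_mem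
    · rw [hextB _ _ hB]
      exact Finset.mem_insert_of_mem (Finset.mem_image_of_mem _
        (Finset.mem_erase.2 ⟨hi, P.part_mem.2 (Finset.mem_univ _)⟩))
    · simp
  have eBb : ∀ P, ∀ B ∈ P.parts, ∀ i, P.part i = B →
      (extB P B).part i.castSucc = insert (Fin.last n) (B.map Fin.castSuccEmb) := by
    intro P B hB i hi
    apply Finpartition.part_eq_of_mem
    · rw [hextB _ _ hB]
      exact Finset.mem_insert_self _ _
    · subst hi
      simp
  have r0 : ∀ P i j, j.castSucc ∈ (ext0 P).part i.castSucc ↔ j ∈ P.part i := by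
    intro P i j
    rw [e0c]; simp
  have rB : ∀ P, ∀ B ∈ P.parts, ∀ i j,
      j.castSucc ∈ (extB P B).part i.castSucc ↔ j ∈ P.part i := by
    intro P B hB i j
    by_cases hi : P.part i = B
    · rw [eBb P B hB i hi, hi]; simp
    · rw [eBc P B hB i hi]; simp
  let f : (Σ P : Finpartition (Finset.univ : Finset (Fin n)), Option P.parts) →
      Finpartition (Finset.univ : Finset (Fin (n + 1))) :=
    fun x => match x with
      | ⟨P, none⟩ => ext0 P
      | ⟨P, some B⟩ => extB P B.1
  have rf : ∀ x i j, j.castSucc ∈ (f x).part i.castSucc ↔ j ∈ x.1.part i := by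
    rintro ⟨P, _ | B⟩ i j
    · exact r0 P i j
    · exact rB P B.1 B.2 i j
  have f0 : ∀ P, f ⟨P, none⟩ = ext0 P := fun _ => rfl
  have fB : ∀ P B, f ⟨P, some B⟩ = extB P B.1 := fun _ _ => rfl
  have hf : Function.Bijective f := by
    constructor
    · rintro ⟨P, o⟩ ⟨P', o'⟩ h
      have hP : P = P' := by
        apply mc_ext
        intro i
        ext j
        rw [← rf ⟨P, o⟩, ← rf ⟨P', o'⟩, h]
      subst hP
      have hl := congrArg (fun Q => Q.part (Fin.last n)) h
      have hne : ∀ B : P.parts,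
          ({Fin.last n} : Finset (Fin (n+1))) ≠ insert (Fin.last n) (B.1.map Fin.castSuccEmb) := by
        intro B hB
        obtain ⟨i, hi⟩ := P.nonempty_of_mem_parts B.2
        have : i.castSucc ∈ ({Fin.last n} : Finset (Fin (n+1))) := by
          rw [hB]; simp [hi]
        simp at this
      rcases o with _ | B <;> rcases o' with _ | B'
      · rfl
      · simp only [f0, fB, e0l, eBl P _ B'.2] at hl
        exact absurd hl (hne B')
      · simp only [f0, fB, e0l, eBl P _ B.2] at hl
        exact absurd hl.symm (hne B)
      · simp only [fB, eBl P _ B'.2, eBl P _ B.2] at hl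
        have : B = B' := by
          apply Subtype.ext
          ext i
          have := congrArg (fun s => i.castSucc ∈ s) hl
          simpa using this
        rw [this]
    · intro Q
      let st : Setoid (Fin n) := Setoid.ker (fun i => Q.part i.castSucc)
      let P := Finpartition.ofSetoid st
      have hP : ∀ i j, j ∈ P.part i ↔ j.castSucc ∈ Q.part i.castSucc := by
        intro i j
        rw [Finpartition.mem_part_ofSetoid_iff_rel, Setoid.ker_def,
          Finpartition.mem_part_iff_part_eq_part _ (Finset.mem_univ _) (Finset.mem_univ _)]
        exact eq_comm
      have hsym : ∀ a b, a ∈ Q.part b ↔ b ∈ Q.part a := by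
        intro a b
        rw [Finpartition.mem_part_iff_part_eq_part _ (Finset.mem_univ _) (Finset.mem_univ _),
          Finpartition.mem_part_iff_part_eq_part _ (Finset.mem_univ _) (Finset.mem_univ _)]
        exact eq_comm
      have hQl : Fin.last n ∈ Q.part (Fin.last n) := Q.mem_part (Finset.mem_univ _)
      by_cases hk : ∃ k : Fin n, k.castSucc ∈ Q.part (Fin.last n)
      · obtain ⟨k, hk⟩ := hk
        have hB : P.part k ∈ P.parts := P.part_mem.2 (Finset.mem_univ _)
        have hkl : Q.part k.castSucc = Q.part (Fin.last n) :=
          (Finpartition.mem_part_iff_part_eq_part _ (Finset.mem_univ _) (Finset.mem_univ _)).1 hk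
        have hins : insert (Fin.last n) ((P.part k).map Fin.castSuccEmb) =
            Q.part (Fin.last n) := by
          ext a
          refine Fin.lastCases ?_ (fun a => ?_) a
          · simp [hQl]
          · rw [← hkl]; simp [hP]
        refine ⟨⟨P, some ⟨P.part k, hB⟩⟩, ?_⟩
        rw [fB]
        apply mc_ext
        intro a
        refine Fin.lastCases ?_ (fun i => ?_) a
        · rw [eBl _ _ hB, hins]
        · by_cases hi : P.part i = P.part k
          · rw [eBb _ _ hB _ hi, hins, ← hkl]
            have := (Finpartition.mem_part_iff_part_eq_part P (Finset.mem_univ i)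
              (Finset.mem_univ k)).2 hi
            rw [hP] at this
            exact ((Finpartition.mem_part_iff_part_eq_part _ (Finset.mem_univ _)
              (Finset.mem_univ _)).1 this).symm
          · rw [eBc _ _ hB _ hi]
            ext b
            refine Fin.lastCases ?_ (fun b => ?_) b
            · have : Fin.last n ∉ Q.part i.castSucc := by
                intro hc
                rw [hsym, ← hkl, ← hP] at hc
                exact hi ((Finpartition.mem_part_iff_part_eq_part P (Finset.mem_univ i)
                  (Finset.mem_univ k)).1 hc)
              simp [this]
            · simp [hP]
      · push Not at hk
        refine ⟨⟨P, none⟩, ?_⟩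
        rw [f0]
        apply mc_ext
        intro a
        refine Fin.lastCases ?_ (fun i => ?_) a
        · rw [e0l]
          ext b
          refine Fin.lastCases ?_ (fun b => ?_) b
          · simp [hQl]
          · simp [hk b]
        · rw [e0c]
          ext b
          refine Fin.lastCases ?_ (fun b => ?_) b
          · have : Fin.last n ∉ Q.part i.castSucc := by
              rw [hsym]; exact hk i
            simp [this]
          · simp [hP]
  have hm : Measurable (fun (x : Fin (n + 1) → Circle1) (i : Fin n) => x i.castSucc) := by
    fun_prop
  rw [Measure.map_finset_sum' hm.aemeasurable]
  simp only [Measure.map_smul]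
  rw [← hf.sum_comp, Fintype.sum_sigma]
  apply Finset.sum_congr rfl
  intro P _
  rw [Fintype.sum_option]
  simp only [mc_lambda lam P _ (rf ⟨P, _⟩)]
  simp only [f0, fB]
  rw [Finset.sum_coe_sort P.parts
    (fun B => ENNReal.ofReal (w' (extB P B)) • lambdaPart lam P), ← Finset.sum_smul,
    ← add_smul, hcons P, ENNReal.ofReal_add (hw'0 _) (Finset.sum_nonneg fun _ _ => hw'0 _),
    ENNReal.ofReal_sum_of_nonneg (fun _ _ => hw'0 _)]

end
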